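/- Fix ν > 0. Then as λ → ∞, Z(λ,ν) = exp(ν·λ^(1/ν)) / (λ^((ν-1)/(2ν)) · (2π)^((ν-1)/2) · √ν) · (1 + O(λ^(-1/ν))). Precisely: there exist constants C > 0 and Λ > 0 (depending only on ν) such that for all λ ≥ Λ, |Z(λ,ν) · λ^((ν-1)/(2ν)) · (2π)^((ν-1)/2) · √ν · exp(-ν·λ^(1/ν)) − 1| ≤ C·λ^(-1/ν). -/

import Mathlib

open scoped BigOperators

/-- The Conway-Maxwell-Poisson normalizing constant `Z(λ,ν) = ∑_{i=0}^∞ λ^i/(i!)^ν`. -/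
noncomputable def cmpZ (lam nu : ℝ) : ℝ := ∑' i : ℕ, lam ^ i / (i.factorial : ℝ) ^ nu

/-!
With `α = λ^(1/ν)`, the summand of `(2πα)^(ν/2) Z(λ, ν)` is, by Stirling's formula, the value at
`i + 1/2` of `G_ν(y) = (α e / y)^(ν y)`, up to a factor `1 + O(1/(i + 1))`. Since `log G_ν` is
concave with second derivative `-ν/y`, the midpoint and trapezoid rules bound `∫ G_ν` from below and
above by these values with the same relative error, and the average of `1/(i + 1)` against the
summands is `O(1/α)`. So the sum is `∫ G_ν` up to a factor `1 + O(1/α)`. The substitution `y ↦ ν y`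
reduces `∫ G_ν` to the case `ν = 1`, where the series is the exponential series and no Laplace
asymptotics are needed.
-/

open Real Filter Topology MeasureTheory Asymptotics

lemma mul_log_add_sub_le_mul_log {x z : ℝ} (hx : 0 ≤ x) (hz : 0 < z) :
    x * log z + (x - z) ≤ x * log x := by
  rcases hx.eq_or_lt with rfl | hx
  · simpa using hz.le
  · have h := mul_le_mul_of_nonneg_left (one_sub_inv_le_log_of_pos (div_pos hx hz)) hx.le
    rw [log_div hx.ne' hz.ne', inv_div, mul_sub, mul_sub, mul_div_cancel₀ _ hx.ne'] at h
    linarith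

lemma mul_log_le_mul_log_add {x z : ℝ} (hx : 0 ≤ x) (hz : 0 < z) :
    x * log x ≤ x * log z + x * (x / z - 1) := by
  rcases hx.eq_or_lt with rfl | hx
  · simp
  · have h := mul_le_mul_of_nonneg_left (log_le_sub_one_of_pos (div_pos hx hz)) hx.le
    rw [log_div hx.ne' hz.ne', mul_sub] at h
    linarith

lemma convexCombo_mul_log_le {x y s t : ℝ} (hx : 0 < x) (hy : 0 < y) (hs : 0 ≤ s) (ht : 0 ≤ t)
    (hst : s + t = 1) :
    s * (x * log x) + t * (y * log y) ≤
      (s * x + t * y) * log (s * x + t * y) + s * t * (x - y) ^ 2 / (s * x + t * y) := by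
  have hz : 0 < s * x + t * y := (convex_Ioi (0 : ℝ)) hx hy hs ht hst
  have variance_eq : s * (x * (x / (s * x + t * y) - 1)) + t * (y * (y / (s * x + t * y) - 1)) =
      s * t * (x - y) ^ 2 / (s * x + t * y) := by
    obtain rfl : s = 1 - t := by linarith
    field_simp
    ring
  have h₁ := mul_le_mul_of_nonneg_left (mul_log_le_mul_log_add hx.le hz) hs
  have h₂ := mul_le_mul_of_nonneg_left (mul_log_le_mul_log_add hy.le hz) ht
  linarith

lemma exp_le_one_add_mul_exp (x : ℝ) : exp x ≤ 1 + x * exp x := by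
  have h := mul_le_mul_of_nonneg_right (one_sub_le_exp_neg x) (exp_pos x).le
  rw [← exp_add, neg_add_cancel, exp_zero] at h
  linarith

lemma log_stirlingSeq_le {n : ℕ} (hn : n ≠ 0) :
    log (Stirling.stirlingSeq n) ≤ log √π + 1 / (12 * n) := by
  obtain ⟨n, rfl⟩ := Nat.exists_eq_add_one_of_ne_zero hn
  have step (k : ℕ) : log (Stirling.stirlingSeq (k + 1)) - 1 / 12 * (1 / ((k : ℝ) + 1)) ≤
      log (Stirling.stirlingSeq (k + 1 + 1)) - 1 / 12 * (1 / (((k + 1 : ℕ) : ℝ) + 1)) := by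
    have h := Stirling.log_stirlingSeq_sdiff_le (k + 1)
    have telescope : (1 : ℝ) / (12 * ((k + 1 : ℕ) : ℝ) * (((k + 1 : ℕ) : ℝ) + 1)) =
        1 / 12 * (1 / ((k : ℝ) + 1)) - 1 / 12 * (1 / (((k + 1 : ℕ) : ℝ) + 1)) := by
      push_cast
      field_simp
      ring
    linarith
  have lim : Tendsto (fun k : ℕ ↦
      log (Stirling.stirlingSeq (k + 1)) - 1 / 12 * (1 / ((k : ℝ) + 1))) atTop (𝓝 (log √π)) := by
    have h := ((Stirling.tendsto_stirlingSeq_sqrt_pi.comp (tendsto_add_atTop_nat 1)).log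
      (by positivity)).sub ((tendsto_one_div_add_atTop_nhds_zero_nat (𝕜 := ℝ)).const_mul (1 / 12))
    rwa [mul_zero, sub_zero] at h
  have h := (monotone_nat_of_le_succ step).ge_of_tendsto lim n
  have : (1 : ℝ) / (12 * (n + 1 : ℕ)) = 1 / 12 * (1 / ((n : ℝ) + 1)) := by
    push_cast
    field_simp
  linarith

lemma log_factorial_le_stirling {n : ℕ} (hn : n ≠ 0) :
    log n.factorial ≤ n * log n - n + log n / 2 + log (2 * π) / 2 + 1 / (12 * n) := by
  have hn' : (n : ℝ) ≠ 0 := Nat.cast_ne_zero.mpr hn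
  have h := log_stirlingSeq_le hn
  rw [Stirling.log_stirlingSeq_formula, log_sqrt pi_pos.le, log_mul two_ne_zero hn',
    log_div hn' (exp_ne_zero 1), log_exp] at h
  rw [log_mul two_ne_zero pi_ne_zero]
  linarith

-- Expanding around `i + 1/2` absorbs the `log i / 2` of Stirling's formula.
lemma abs_log_factorial_sub_stirling_half_le (i : ℕ) :
    |log i.factorial - ((i + 1 / 2) * log (i + 1 / 2) - (i + 1 / 2) + log (2 * π) / 2)| ≤
      1 / (i + 1) := by
  rcases eq_or_ne i 0 with rfl | hi
  · have hlog : log (1 / 2 : ℝ) = -log 2 := by rw [one_div, log_inv]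
    have hπ₀ : 0 ≤ log π := log_nonneg (by linarith [pi_gt_three])
    have hπ₁ : log π ≤ π - 1 := log_le_sub_one_of_pos pi_pos
    rw [Nat.factorial_zero, Nat.cast_one, log_one, Nat.cast_zero, zero_add, zero_add, hlog,
      log_mul two_ne_zero pi_ne_zero, abs_le]
    constructor <;> linarith [pi_le_four]
  · have hi₁ : (1 : ℝ) ≤ i := by exact_mod_cast Nat.one_le_iff_ne_zero.mpr hi
    have hi₀ : (0 : ℝ) < i := by linarith
    have lower := Stirling.le_log_factorial_stirling hi
    have upper := log_factorial_le_stirling hi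
    have half_lower := mul_log_add_sub_le_mul_log (x := i + 1 / 2) (by positivity) hi₀
    have half_upper := mul_log_le_mul_log_add (x := i + 1 / 2) (by positivity) hi₀
    have defect_eq : ((i : ℝ) + 1 / 2) * ((i + 1 / 2) / i - 1) = 1 / 2 + 1 / (4 * i) := by
      field_simp
      ring
    have h₁ : (1 : ℝ) / (4 * i) ≤ 1 / (i + 1) := by gcongr; linarith
    have h₂ : (1 : ℝ) / (12 * i) ≤ 1 / (i + 1) := by gcongr; linarith
    rw [abs_le]
    constructor <;> linarith

/-- The term `(√(2πα) α^i / i!)^ν` of the series `Z(α^ν, ν)`, scaled by `(2πα)^(ν/2)` so that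
Stirling's formula turns it into `cmpDensity ν α (i + 1/2)`. -/
noncomputable def cmpWeight (ν α : ℝ) (i : ℕ) : ℝ :=
  (√(2 * π * α) * (α ^ i / i.factorial)) ^ ν

/-- The function `(α e / y)^(ν y)`, the continuous counterpart of `cmpWeight` in which Stirling's
approximation replaces the factorial. The exponential form makes it continuous at `y = 0`, where
`0 * log 0 = 0`. -/
noncomputable def cmpDensity (ν α y : ℝ) : ℝ :=
  exp (ν * (y * (1 + log α) - y * log y))

lemma integral_affine (p q a b : ℝ) :
    ∫ y in a..b, (p + q * y) = p * (b - a) + q * ((b ^ 2 - a ^ 2) / 2) := by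
  rw [intervalIntegral.integral_add (by simp) (Continuous.intervalIntegrable (by fun_prop) _ _),
    intervalIntegral.integral_const, intervalIntegral.integral_const_mul, integral_id, smul_eq_mul,
    mul_comm p]

section Density

variable {ν α : ℝ}

lemma cmpDensity_pos (ν α y : ℝ) : 0 < cmpDensity ν α y := exp_pos _

lemma continuous_cmpDensity (ν α : ℝ) : Continuous (cmpDensity ν α) := by
  have := continuous_mul_log
  unfold cmpDensity
  fun_prop

lemma cmpDensity_mono_left {y z : ℝ} (hν : 0 ≤ ν) (hy : 0 ≤ y) (hyz : y ≤ z) (hz : 0 < z)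
    (hzα : z ≤ α) : cmpDensity ν α y ≤ cmpDensity ν α z := by
  have tangent := mul_log_add_sub_le_mul_log hy hz
  have slope := mul_le_mul_of_nonneg_right hyz (sub_nonneg.mpr (log_le_log hz hzα))
  unfold cmpDensity
  gcongr exp (ν * ?_)
  linarith

lemma cmpDensity_tangent_le {m y : ℝ} (hν : 0 ≤ ν) (hm : 0 < m) (hy : 0 ≤ y)
    (hym : |y - m| ≤ 1 / 2) :
    cmpDensity ν α m * exp (-(ν / (4 * m))) * (1 + ν * (log α - log m) * (y - m)) ≤
      cmpDensity ν α y := by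
  have hsq : (y - m) ^ 2 ≤ 1 / 4 := by
    have := sq_le_sq.mpr (hym.trans (le_abs_self _))
    linarith
  have defect_le : (y - m) ^ 2 / m ≤ 1 / (4 * m) := by
    rw [div_le_div_iff₀ hm (by positivity)]
    nlinarith
  have defect_eq : y * (y / m - 1) = (y - m) + (y - m) ^ 2 / m := by
    field_simp
    ring
  have hlog := mul_log_le_mul_log_add hy hm
  have exponent_le : ν * (m * (1 + log α) - m * log m) + -(ν / (4 * m)) +
      ν * (log α - log m) * (y - m) ≤ ν * (y * (1 + log α) - y * log y) := by
    calc _ = ν * (m * (1 + log α) - m * log m - 1 / (4 * m) + (log α - log m) * (y - m)) := by ring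
      _ ≤ _ := by gcongr; linarith
  calc _ ≤ cmpDensity ν α m * exp (-(ν / (4 * m))) * exp (ν * (log α - log m) * (y - m)) := by
        have := cmpDensity_pos ν α m
        gcongr
        linarith [add_one_le_exp (ν * (log α - log m) * (y - m))]
    _ = exp (ν * (m * (1 + log α) - m * log m) + -(ν / (4 * m)) +
          ν * (log α - log m) * (y - m)) := by rw [cmpDensity, exp_add, exp_add]
    _ ≤ cmpDensity ν α y := exp_le_exp.mpr exponent_le

lemma cmpDensity_midpoint_le_integral {a : ℝ} (hν : 0 ≤ ν) (ha : 0 ≤ a) :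
    cmpDensity ν α (a + 1 / 2) * exp (-(ν / (4 * (a + 1 / 2)))) ≤
      ∫ y in a..a + 1, cmpDensity ν α y := by
  set c := cmpDensity ν α (a + 1 / 2) * exp (-(ν / (4 * (a + 1 / 2))))
  set k := ν * (log α - log (a + 1 / 2))
  calc c = ∫ y in a..a + 1, c * (1 + k * (y - (a + 1 / 2))) := by
        have affine (y : ℝ) : c * (1 + k * (y - (a + 1 / 2))) =
            (c - c * k * (a + 1 / 2)) + c * k * y := by ring
        simp only [affine, integral_affine]
        ring
    _ ≤ ∫ y in a..a + 1, cmpDensity ν α y := by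
        refine intervalIntegral.integral_mono_on (by linarith)
          (Continuous.intervalIntegrable (by fun_prop) _ _)
          ((continuous_cmpDensity ν α).intervalIntegrable _ _) fun y hy ↦ ?_
        refine cmpDensity_tangent_le hν (by linarith) (ha.trans hy.1) ?_
        rw [abs_le]
        constructor <;> linarith [hy.1, hy.2]

lemma cmpDensity_add_le_chord {a t : ℝ} (hν : 0 ≤ ν) (ha : 0 < a) (ht₀ : 0 ≤ t) (ht₁ : t ≤ 1) :
    cmpDensity ν α (a + t) ≤
      exp (ν / (4 * a)) * ((1 - t) * cmpDensity ν α a + t * cmpDensity ν α (a + 1)) := by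
  have ht₁' : 0 ≤ 1 - t := sub_nonneg.mpr ht₁
  have point_eq : (1 - t) * a + t * (a + 1) = a + t := by ring
  have convex_defect := convexCombo_mul_log_le ha (by linarith : 0 < a + 1) ht₁' ht₀ (by ring)
  rw [point_eq] at convex_defect
  have defect_le : (1 - t) * t * (a - (a + 1)) ^ 2 / (a + t) ≤ 1 / (4 * a) := by
    rw [div_le_div_iff₀ (by positivity) (by positivity)]
    nlinarith [sq_nonneg (t - 1 / 2)]
  calc cmpDensity ν α (a + t)
      ≤ exp (ν * (1 / (4 * a) + ((1 - t) * (a * (1 + log α) - a * log a) +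
          t * ((a + 1) * (1 + log α) - (a + 1) * log (a + 1))))) := by
        unfold cmpDensity
        gcongr exp (ν * ?_)
        linarith
    _ = exp (ν / (4 * a)) * exp ((1 - t) * (ν * (a * (1 + log α) - a * log a)) +
          t * (ν * ((a + 1) * (1 + log α) - (a + 1) * log (a + 1)))) := by
        rw [← exp_add]
        ring_nf
    _ ≤ exp (ν / (4 * a)) * ((1 - t) * cmpDensity ν α a + t * cmpDensity ν α (a + 1)) := by
        gcongr
        exact convexOn_exp.2 trivial trivial ht₁' ht₀ (by ring)

lemma integral_cmpDensity_le_trapezoid {a : ℝ} (hν : 0 ≤ ν) (ha : 0 < a) :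
    ∫ y in a..a + 1, cmpDensity ν α y ≤
      exp (ν / (4 * a)) * ((cmpDensity ν α a + cmpDensity ν α (a + 1)) / 2) := by
  have hcont := continuous_cmpDensity ν α
  set u := cmpDensity ν α a
  set v := cmpDensity ν α (a + 1)
  calc ∫ y in a..a + 1, cmpDensity ν α y = ∫ t in (0 : ℝ)..1, cmpDensity ν α (a + t) := by
        rw [intervalIntegral.integral_comp_add_left, add_zero]
    _ ≤ ∫ t in (0 : ℝ)..1, exp (ν / (4 * a)) * ((1 - t) * u + t * v) :=
        intervalIntegral.integral_mono_on zero_le_one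
          (Continuous.intervalIntegrable (by fun_prop) _ _)
          (Continuous.intervalIntegrable (by fun_prop) _ _)
          fun t ht ↦ cmpDensity_add_le_chord hν ha ht.1 ht.2
    _ = exp (ν / (4 * a)) * ((u + v) / 2) := by
        have affine (t : ℝ) : (1 - t) * u + t * v = u + (v - u) * t := by ring
        simp only [intervalIntegral.integral_const_mul, affine, integral_affine]
        ring

lemma integral_cmpDensity_mul_left (hν : 0 < ν) (hα : 0 < α) :
    ∫ y in Set.Ioi 0, cmpDensity 1 (ν * α) y = ν * ∫ y in Set.Ioi 0, cmpDensity ν α y := by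
  have scale (y : ℝ) (hy : y ∈ Set.Ioi (0 : ℝ)) :
      cmpDensity 1 (ν * α) (ν * y) = cmpDensity ν α y := by
    unfold cmpDensity
    rw [log_mul hν.ne' hα.ne', log_mul hν.ne' (Set.mem_Ioi.mp hy).ne']
    ring_nf
  have h := integral_comp_mul_left_Ioi (cmpDensity 1 (ν * α)) 0 hν
  rw [setIntegral_congr_fun measurableSet_Ioi scale, mul_zero, smul_eq_mul] at h
  rw [h, mul_inv_cancel_left₀ hν.ne']

end Density

section Weight

variable {ν α : ℝ}

lemma cmpWeight_pos (ν : ℝ) (hα : 0 < α) (i : ℕ) : 0 < cmpWeight ν α i := by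
  unfold cmpWeight
  positivity

lemma cmpWeight_succ (ν : ℝ) (hα : 0 ≤ α) (i : ℕ) :
    cmpWeight ν α (i + 1) = cmpWeight ν α i * (α / (i + 1)) ^ ν := by
  unfold cmpWeight
  rw [← mul_rpow (by positivity) (by positivity), Nat.factorial_succ]
  congr 1
  push_cast
  field_simp
  ring

lemma summable_cmpWeight (hν : 0 < ν) (hα : 0 < α) : Summable (cmpWeight ν α) := by
  refine summable_of_ratio_test_tendsto_lt_one one_pos
    (.of_forall fun i ↦ (cmpWeight_pos ν hα i).ne') ?_
  have ratio (i : ℕ) : ‖cmpWeight ν α (i + 1)‖ / ‖cmpWeight ν α i‖ =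
      (α * (1 / ((i : ℝ) + 1))) ^ ν := by
    rw [norm_of_nonneg (cmpWeight_pos ν hα _).le, norm_of_nonneg (cmpWeight_pos ν hα _).le,
      cmpWeight_succ ν hα.le, mul_div_cancel_left₀ _ (cmpWeight_pos ν hα i).ne', mul_one_div]
  have lim := (tendsto_one_div_add_atTop_nhds_zero_nat (𝕜 := ℝ)).const_mul α |>.rpow_const
    (.inr hν.le)
  rw [mul_zero, zero_rpow hν.ne'] at lim
  exact lim.congr fun i ↦ (ratio i).symm

lemma summable_cmpWeight_div (hν : 0 < ν) (hα : 0 < α) :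
    Summable fun i : ℕ ↦ cmpWeight ν α i / ((i : ℝ) + 1) :=
  (summable_cmpWeight hν hα).of_nonneg_of_le
    (fun i ↦ div_nonneg (cmpWeight_pos ν hα i).le (by positivity))
    fun i ↦ div_le_self (cmpWeight_pos ν hα i).le (by simp)

-- Either `i + 1` is at least of order `α`, or the weights grow by a factor of at least `4`.
lemma cmpWeight_div_le (hν : 0 < ν) (hα : 0 < α) (i : ℕ) :
    cmpWeight ν α i / (i + 1) ≤ 4 ^ (1 / ν) / α * cmpWeight ν α i +
      1 / 2 * (cmpWeight ν α (i + 1) / ((i + 1 : ℕ) + 1)) := by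
  have hw := cmpWeight_pos ν hα i
  have hw' := cmpWeight_pos ν hα (i + 1)
  rcases le_total (α / (i + 1)) (4 ^ (1 / ν)) with hi | hi
  · have : cmpWeight ν α i / (i + 1) ≤ 4 ^ (1 / ν) / α * cmpWeight ν α i :=
      calc _ = α / (i + 1) / α * cmpWeight ν α i := by field_simp
        _ ≤ _ := by gcongr
    exact this.trans (le_add_of_nonneg_right (by positivity))
  · have growth : 4 * cmpWeight ν α i ≤ cmpWeight ν α (i + 1) :=
      calc 4 * cmpWeight ν α i = cmpWeight ν α i * (4 ^ (1 / ν)) ^ ν := by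
            rw [← rpow_mul (by norm_num), one_div_mul_cancel hν.ne', rpow_one, mul_comm]
        _ ≤ cmpWeight ν α i * (α / (i + 1)) ^ ν := by gcongr
        _ = cmpWeight ν α (i + 1) := (cmpWeight_succ ν hα.le i).symm
    have : cmpWeight ν α i / (i + 1) ≤
        1 / 2 * (cmpWeight ν α (i + 1) / ((i + 1 : ℕ) + 1)) := by
      rw [← mul_div_assoc, div_le_div_iff₀ (by positivity) (by positivity)]
      push_cast
      nlinarith
    exact this.trans (le_add_of_nonneg_left (by positivity))

lemma tsum_cmpWeight_div_le (hν : 0 < ν) (hα : 0 < α) :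
    ∑' i : ℕ, cmpWeight ν α i / ((i : ℝ) + 1) ≤
      2 * 4 ^ (1 / ν) / α * ∑' i, cmpWeight ν α i := by
  have hw := summable_cmpWeight hν hα
  have hr := summable_cmpWeight_div hν hα
  have hr' := (summable_nat_add_iff 1).mpr hr
  set R := ∑' i : ℕ, cmpWeight ν α i / ((i : ℝ) + 1) with hR
  have tail_le : ∑' i : ℕ, cmpWeight ν α (i + 1) / ((i + 1 : ℕ) + 1 : ℝ) ≤ R := by
    rw [hR, hr.tsum_eq_zero_add]
    exact le_add_of_nonneg_left (div_nonneg (cmpWeight_pos ν hα 0).le (by positivity))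
  have absorb : R ≤ 4 ^ (1 / ν) / α * ∑' i, cmpWeight ν α i + 1 / 2 * R :=
    calc R ≤ ∑' i : ℕ, (4 ^ (1 / ν) / α * cmpWeight ν α i +
            1 / 2 * (cmpWeight ν α (i + 1) / ((i + 1 : ℕ) + 1))) :=
          hr.tsum_le_tsum (cmpWeight_div_le hν hα) ((hw.mul_left _).add (hr'.mul_left _))
      _ = 4 ^ (1 / ν) / α * ∑' i, cmpWeight ν α i +
            1 / 2 * ∑' i : ℕ, cmpWeight ν α (i + 1) / ((i + 1 : ℕ) + 1 : ℝ) := by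
          rw [(hw.mul_left _).tsum_add (hr'.mul_left _), tsum_mul_left, tsum_mul_left]
      _ ≤ _ := by gcongr
  rw [mul_div_assoc, mul_assoc]
  linarith

lemma log_cmpWeight (ν : ℝ) (hα : 0 < α) (i : ℕ) :
    log (cmpWeight ν α i) = ν * ((i + 1 / 2) * log α + log (2 * π) / 2 - log i.factorial) := by
  unfold cmpWeight
  rw [log_rpow (by positivity), log_mul (by positivity) (by positivity), log_sqrt (by positivity),
    log_mul (by positivity) hα.ne', log_div (by positivity) (by positivity), log_pow]
  ring

lemma abs_log_cmpWeight_sub_log_cmpDensity_le (hν : 0 ≤ ν) (hα : 0 < α) (i : ℕ) :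
    |log (cmpWeight ν α i) - log (cmpDensity ν α (i + 1 / 2))| ≤ ν / (i + 1) := by
  rw [log_cmpWeight ν hα, cmpDensity, log_exp, ← mul_sub, abs_mul, abs_of_nonneg hν,
    div_eq_mul_one_div ν]
  gcongr
  refine le_of_eq_of_le ?_ (abs_log_factorial_sub_stirling_half_le i)
  rw [← abs_neg]
  ring_nf

lemma cmpWeight_le_cmpDensity (hν : 0 ≤ ν) (hα : 0 < α) (i : ℕ) :
    cmpWeight ν α i ≤ cmpDensity ν α (i + 1 / 2) * exp (ν / (i + 1)) := by
  rw [← log_le_log_iff (cmpWeight_pos ν hα i) (mul_pos (cmpDensity_pos ..) (exp_pos _)),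
    log_mul (cmpDensity_pos ..).ne' (exp_ne_zero _), log_exp]
  linarith [(abs_le.mp (abs_log_cmpWeight_sub_log_cmpDensity_le hν hα i)).2]

lemma cmpDensity_le_cmpWeight (hν : 0 ≤ ν) (hα : 0 < α) (i : ℕ) :
    cmpDensity ν α (i + 1 / 2) ≤ cmpWeight ν α i * exp (ν / (i + 1)) := by
  rw [← log_le_log_iff (cmpDensity_pos ..) (mul_pos (cmpWeight_pos ν hα i) (exp_pos _)),
    log_mul (cmpWeight_pos ν hα i).ne' (exp_ne_zero _), log_exp]
  linarith [(abs_le.mp (abs_log_cmpWeight_sub_log_cmpDensity_le hν hα i)).1]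

end Weight

section SumIntegral

variable {ν α : ℝ}

lemma cmpWeight_mul_exp_le_integral (hν : 0 ≤ ν) (hα : 0 < α) (i : ℕ) :
    cmpWeight ν α i * exp (-(2 * ν / (i + 1))) ≤ ∫ y in (i : ℝ)..i + 1, cmpDensity ν α y := by
  have defect_le : ν / (4 * (i + 1 / 2)) ≤ ν / (i + 1) := by
    gcongr
    linarith [(Nat.cast_nonneg i : (0 : ℝ) ≤ i)]
  calc cmpWeight ν α i * exp (-(2 * ν / (i + 1)))
      ≤ cmpDensity ν α (i + 1 / 2) * exp (ν / (i + 1)) * exp (-(2 * ν / (i + 1))) := by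
        gcongr
        exact cmpWeight_le_cmpDensity hν hα i
    _ = cmpDensity ν α (i + 1 / 2) * exp (-(ν / (i + 1))) := by
        rw [mul_assoc, ← exp_add]
        ring_nf
    _ ≤ cmpDensity ν α (i + 1 / 2) * exp (-(ν / (4 * (i + 1 / 2)))) := by
        have := cmpDensity_pos ν α (i + 1 / 2)
        gcongr
    _ ≤ _ := cmpDensity_midpoint_le_integral hν i.cast_nonneg

lemma integral_cmpDensity_le_cmpWeight_trapezoid (hν : 0 ≤ ν) (hα : 0 < α) (i : ℕ) :
    ∫ y in (i : ℝ) + 1 / 2..i + 1 / 2 + 1, cmpDensity ν α y ≤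
      (cmpWeight ν α i * exp (2 * ν / (i + 1)) +
        cmpWeight ν α (i + 1) * exp (2 * ν / ((i + 1 : ℕ) + 1))) / 2 := by
  have : (0 : ℝ) ≤ i := i.cast_nonneg
  have endpoint_le (j : ℕ) (hj : (j : ℝ) ≤ i + 1) :
      exp (ν / (4 * (i + 1 / 2))) * cmpDensity ν α (j + 1 / 2) ≤
        cmpWeight ν α j * exp (2 * ν / (j + 1)) := by
    have : (0 : ℝ) ≤ j := j.cast_nonneg
    calc _ ≤ exp (ν / (j + 1)) * (cmpWeight ν α j * exp (ν / (j + 1))) := by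
          have := cmpDensity_pos ν α (j + 1 / 2)
          gcongr
          · linarith
          · exact cmpDensity_le_cmpWeight hν hα j
      _ = cmpWeight ν α j * exp (2 * ν / (j + 1)) := by
          rw [mul_left_comm, ← exp_add]
          ring_nf
  have left_le := endpoint_le i (by linarith)
  have right_le := endpoint_le (i + 1) (by push_cast; rfl)
  have right_eq : ((i + 1 : ℕ) : ℝ) + 1 / 2 = i + 1 / 2 + 1 := by
    push_cast
    ring
  rw [right_eq] at right_le
  have trapezoid := integral_cmpDensity_le_trapezoid (α := α) hν (by linarith : 0 < (i : ℝ) + 1 / 2)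
  linarith

lemma integral_cmpDensity_zero_half_le (hν : 0 ≤ ν) (hα : 1 / 2 ≤ α) :
    ∫ y in (0 : ℝ)..1 / 2, cmpDensity ν α y ≤ cmpWeight ν α 0 * exp (2 * ν) / 2 := by
  have first_le := cmpDensity_le_cmpWeight hν (by linarith : 0 < α) 0
  rw [Nat.cast_zero, zero_add, zero_add, div_one] at first_le
  calc ∫ y in (0 : ℝ)..1 / 2, cmpDensity ν α y
      ≤ ∫ _ in (0 : ℝ)..1 / 2, cmpDensity ν α (1 / 2) :=
        intervalIntegral.integral_mono_on (by norm_num)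
          ((continuous_cmpDensity ν α).intervalIntegrable _ _) (by simp)
          fun y hy ↦ cmpDensity_mono_left hν hy.1 hy.2 (by norm_num) hα
    _ = cmpDensity ν α (1 / 2) / 2 := by
        rw [intervalIntegral.integral_const, smul_eq_mul]
        ring
    _ ≤ cmpWeight ν α 0 * exp ν / 2 := by gcongr
    _ ≤ cmpWeight ν α 0 * exp (2 * ν) / 2 := by
        have := cmpWeight_pos ν (by linarith : 0 < α) 0
        gcongr
        linarith

lemma integral_cmpDensity_le_partialSum (hν : 0 ≤ ν) (hα : 1 / 2 ≤ α) (n : ℕ) :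
    ∫ y in (0 : ℝ)..n + 1 / 2, cmpDensity ν α y ≤
      ∑ i ∈ Finset.range n, cmpWeight ν α i * exp (2 * ν / (i + 1)) +
        cmpWeight ν α n * exp (2 * ν / (n + 1)) / 2 := by
  induction n with
  | zero => simpa using integral_cmpDensity_zero_half_le hν hα
  | succ n ih =>
    have hint (a b : ℝ) : IntervalIntegrable (cmpDensity ν α) volume a b :=
      (continuous_cmpDensity ν α).intervalIntegrable a b
    have trapezoid := integral_cmpDensity_le_cmpWeight_trapezoid hν (by linarith : 0 < α) n
    have upper_eq : ((n + 1 : ℕ) : ℝ) + 1 / 2 = n + 1 / 2 + 1 := by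
      push_cast
      ring
    rw [upper_eq, Finset.sum_range_succ,
      ← intervalIntegral.integral_add_adjacent_intervals (hint 0 (n + 1 / 2)) (hint _ _)]
    linarith

lemma summable_cmpWeight_mul_exp (hν : 0 < ν) (hα : 0 < α) :
    Summable fun i : ℕ ↦ cmpWeight ν α i * exp (2 * ν / (i + 1)) := by
  refine ((summable_cmpWeight hν hα).mul_right (exp (2 * ν))).of_nonneg_of_le
    (fun i ↦ mul_nonneg (cmpWeight_pos ν hα i).le (exp_pos _).le) fun i ↦ ?_
  have := cmpWeight_pos ν hα i
  gcongr
  exact div_le_self (by positivity) (by simp)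

lemma integral_cmpDensity_le_tsum (hν : 0 < ν) (hα : 1 / 2 ≤ α) (n : ℕ) :
    ∫ y in (0 : ℝ)..n + 1 / 2, cmpDensity ν α y ≤
      ∑' i : ℕ, cmpWeight ν α i * exp (2 * ν / (i + 1)) := by
  have hα₀ : 0 < α := by linarith
  have hpos (i : ℕ) : 0 < cmpWeight ν α i * exp (2 * ν / (i + 1)) :=
    mul_pos (cmpWeight_pos ν hα₀ i) (exp_pos _)
  calc _ ≤ ∑ i ∈ Finset.range n, cmpWeight ν α i * exp (2 * ν / (i + 1)) +
        cmpWeight ν α n * exp (2 * ν / (n + 1)) / 2 := integral_cmpDensity_le_partialSum hν.le hα n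
    _ ≤ ∑ i ∈ Finset.range (n + 1), cmpWeight ν α i * exp (2 * ν / (i + 1)) := by
        rw [Finset.sum_range_succ]
        gcongr
        exact half_le_self (hpos n).le
    _ ≤ _ := (summable_cmpWeight_mul_exp hν hα₀).sum_le_tsum _ fun i _ ↦ (hpos i).le

lemma tendsto_natCast_add_half_atTop : Tendsto (fun n : ℕ ↦ (n : ℝ) + 1 / 2) atTop atTop :=
  tendsto_atTop_add_const_right _ _ tendsto_natCast_atTop_atTop

lemma integrableOn_cmpDensity (hν : 0 < ν) (hα : 1 / 2 ≤ α) :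
    IntegrableOn (cmpDensity ν α) (Set.Ioi 0) := by
  refine integrableOn_Ioi_of_intervalIntegral_norm_bounded
    (∑' i : ℕ, cmpWeight ν α i * exp (2 * ν / (i + 1))) 0
    (fun n ↦ (continuous_cmpDensity ν α).integrableOn_Ioc) tendsto_natCast_add_half_atTop
    (.of_forall fun n ↦ ?_)
  simpa only [norm_of_nonneg (cmpDensity_pos ν α _).le] using integral_cmpDensity_le_tsum hν hα n

lemma setIntegral_cmpDensity_le_tsum (hν : 0 < ν) (hα : 1 / 2 ≤ α) :
    ∫ y in Set.Ioi 0, cmpDensity ν α y ≤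
      ∑' i : ℕ, cmpWeight ν α i * exp (2 * ν / (i + 1)) :=
  le_of_tendsto' (intervalIntegral_tendsto_integral_Ioi 0 (integrableOn_cmpDensity hν hα)
    tendsto_natCast_add_half_atTop) (integral_cmpDensity_le_tsum hν hα)

lemma tsum_le_setIntegral_cmpDensity (hν : 0 < ν) (hα : 1 / 2 ≤ α) :
    ∑' i : ℕ, cmpWeight ν α i * exp (-(2 * ν / (i + 1))) ≤
      ∫ y in Set.Ioi 0, cmpDensity ν α y := by
  have hα₀ : 0 < α := by linarith
  refine Real.tsum_le_of_sum_range_le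
    (fun i ↦ mul_nonneg (cmpWeight_pos ν hα₀ i).le (exp_pos _).le) fun n ↦ ?_
  have adjacent := intervalIntegral.sum_integral_adjacent_intervals (a := fun k : ℕ ↦ (k : ℝ))
    (n := n) fun k _ ↦ (continuous_cmpDensity ν α).intervalIntegrable (μ := volume) k (k + 1 : ℕ)
  calc ∑ i ∈ Finset.range n, cmpWeight ν α i * exp (-(2 * ν / (i + 1)))
      ≤ ∑ i ∈ Finset.range n, ∫ y in (i : ℝ)..(i + 1 : ℕ), cmpDensity ν α y := by
        gcongr with i
        rw [Nat.cast_add_one]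
        exact cmpWeight_mul_exp_le_integral hν.le hα₀ i
    _ = ∫ y in Set.Ioc (0 : ℝ) n, cmpDensity ν α y := by
        rw [adjacent, Nat.cast_zero, intervalIntegral.integral_of_le n.cast_nonneg]
    _ ≤ ∫ y in Set.Ioi 0, cmpDensity ν α y :=
        setIntegral_mono_set (integrableOn_cmpDensity hν hα)
          (.of_forall fun y ↦ (cmpDensity_pos ν α y).le) Set.Ioc_subset_Ioi_self.eventuallyLE

lemma abs_setIntegral_sub_tsum_le (hν : 0 < ν) (hα : 1 / 2 ≤ α) :
    |(∫ y in Set.Ioi 0, cmpDensity ν α y) - ∑' i, cmpWeight ν α i| ≤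
      2 * ν * exp (2 * ν) * ∑' i : ℕ, cmpWeight ν α i / ((i : ℝ) + 1) := by
  have hα₀ : 0 < α := by linarith
  have hw := summable_cmpWeight hν hα₀
  have hr := (summable_cmpWeight_div hν hα₀).mul_left (2 * ν * exp (2 * ν))
  have hW := summable_cmpWeight_mul_exp hν hα₀
  have hV : Summable fun i : ℕ ↦ cmpWeight ν α i * exp (-(2 * ν / (i + 1))) :=
    hw.of_nonneg_of_le (fun i ↦ mul_nonneg (cmpWeight_pos ν hα₀ i).le (exp_pos _).le)
      fun i ↦ mul_le_of_le_one_right (cmpWeight_pos ν hα₀ i).le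
        (exp_le_one_iff.mpr (neg_nonpos.mpr (by positivity)))
  have error_eq (i : ℕ) : 2 * ν * exp (2 * ν) * (cmpWeight ν α i / (i + 1)) =
      cmpWeight ν α i * (2 * ν / (i + 1) * exp (2 * ν)) := by ring
  have upper (i : ℕ) : cmpWeight ν α i * exp (2 * ν / (i + 1)) ≤
      cmpWeight ν α i + 2 * ν * exp (2 * ν) * (cmpWeight ν α i / (i + 1)) := by
    rw [error_eq, ← mul_one_add]
    refine mul_le_mul_of_nonneg_left ((exp_le_one_add_mul_exp _).trans ?_)
      (cmpWeight_pos ν hα₀ i).le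
    gcongr
    exact div_le_self (by positivity) (by simp)
  have lower (i : ℕ) : cmpWeight ν α i - 2 * ν * exp (2 * ν) * (cmpWeight ν α i / (i + 1)) ≤
      cmpWeight ν α i * exp (-(2 * ν / (i + 1))) := by
    rw [error_eq, ← mul_one_sub]
    refine mul_le_mul_of_nonneg_left (le_trans ?_ (one_sub_le_exp_neg _)) (cmpWeight_pos ν hα₀ i).le
    gcongr
    exact le_mul_of_one_le_right (by positivity) (one_le_exp (by positivity))
  have tsum_upper := hW.tsum_le_tsum upper (hw.add hr)
  have tsum_lower := (hw.sub hr).tsum_le_tsum lower hV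
  rw [hw.tsum_add hr, tsum_mul_left] at tsum_upper
  rw [hw.tsum_sub hr, tsum_mul_left] at tsum_lower
  rw [abs_le]
  constructor
  · linarith [tsum_le_setIntegral_cmpDensity hν hα]
  · linarith [setIntegral_cmpDensity_le_tsum hν hα]

end SumIntegral

section Asymptotics

variable {ν : ℝ}

lemma setIntegral_sub_tsum_isBigO (hν : 0 < ν) :
    (fun α ↦ (∫ y in Set.Ioi 0, cmpDensity ν α y) - ∑' i, cmpWeight ν α i) =O[atTop]
      fun α ↦ α⁻¹ * ∑' i, cmpWeight ν α i := by
  refine .of_bound (2 * ν * exp (2 * ν) * (2 * 4 ^ (1 / ν))) ?_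
  filter_upwards [eventually_ge_atTop (1 / 2)] with α hα
  have hα₀ : 0 < α := by linarith
  have hsum : 0 ≤ ∑' i, cmpWeight ν α i := tsum_nonneg fun i ↦ (cmpWeight_pos ν hα₀ i).le
  rw [norm_of_nonneg (mul_nonneg (inv_nonneg.mpr hα₀.le) hsum), Real.norm_eq_abs]
  calc _ ≤ 2 * ν * exp (2 * ν) * ∑' i : ℕ, cmpWeight ν α i / ((i : ℝ) + 1) :=
        abs_setIntegral_sub_tsum_le hν hα
    _ ≤ 2 * ν * exp (2 * ν) * (2 * 4 ^ (1 / ν) / α * ∑' i, cmpWeight ν α i) := by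
        gcongr
        exact tsum_cmpWeight_div_le hν hα₀
    _ = _ := by ring

lemma setIntegral_isEquivalent_tsum (hν : 0 < ν) :
    (fun α ↦ ∫ y in Set.Ioi 0, cmpDensity ν α y) ~[atTop] fun α ↦ ∑' i, cmpWeight ν α i := by
  refine (setIntegral_sub_tsum_isBigO hν).trans_isLittleO ?_
  simpa only [one_mul] using ((isLittleO_one_iff ℝ).mpr tendsto_inv_atTop_zero).mul_isBigO
    (isBigO_refl (fun α ↦ ∑' i, cmpWeight ν α i) atTop)

lemma mul_tsum_cmpWeight_sub_isBigO (hν : 0 < ν) :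
    (fun α ↦ ν * ∑' i, cmpWeight ν α i - ∑' i, cmpWeight 1 (ν * α) i) =O[atTop]
      fun α ↦ α⁻¹ * ∑' i, cmpWeight 1 (ν * α) i := by
  have hscale : Tendsto (ν * ·) atTop atTop := tendsto_id.const_mul_atTop hν
  have integral_eq : (fun α ↦ ∫ y in Set.Ioi 0, cmpDensity 1 (ν * α) y) =ᶠ[atTop]
      fun α ↦ ν * ∫ y in Set.Ioi 0, cmpDensity ν α y :=
    (eventually_gt_atTop 0).mono fun α hα ↦ integral_cmpDensity_mul_left hν hα
  have one_error : (fun α ↦ (∫ y in Set.Ioi 0, cmpDensity 1 (ν * α) y) -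
      ∑' i, cmpWeight 1 (ν * α) i) =O[atTop] fun α ↦ α⁻¹ * ∑' i, cmpWeight 1 (ν * α) i := by
    refine ((setIntegral_sub_tsum_isBigO one_pos).comp_tendsto hscale).trans ?_
    simp only [Function.comp_def, mul_inv, mul_assoc]
    exact (isBigO_refl _ _).const_mul_left _
  have tsum_isBigO : (fun α ↦ ∑' i, cmpWeight ν α i) =O[atTop]
      fun α ↦ ∑' i, cmpWeight 1 (ν * α) i :=
    calc (fun α ↦ ∑' i, cmpWeight ν α i)
        =O[atTop] fun α ↦ ∫ y in Set.Ioi 0, cmpDensity ν α y :=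
          (setIntegral_isEquivalent_tsum hν).isBigO_symm
      _ =O[atTop] fun α ↦ ν * ∫ y in Set.Ioi 0, cmpDensity ν α y :=
          isBigO_self_const_mul hν.ne' _ _
      _ =ᶠ[atTop] fun α ↦ ∫ y in Set.Ioi 0, cmpDensity 1 (ν * α) y := integral_eq.symm
      _ =O[atTop] fun α ↦ ∑' i, cmpWeight 1 (ν * α) i :=
          ((setIntegral_isEquivalent_tsum one_pos).comp_tendsto hscale).isBigO
  have nu_error := ((setIntegral_sub_tsum_isBigO hν).trans
    ((isBigO_refl _ _).mul tsum_isBigO)).const_mul_left ν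
  refine (one_error.sub nu_error).congr' ?_ .rfl
  filter_upwards [integral_eq] with α hα
  rw [hα]
  ring

end Asymptotics

section ClosedForm

variable {ν : ℝ}

lemma tsum_cmpWeight (ν : ℝ) {α : ℝ} (hα : 0 ≤ α) :
    ∑' i, cmpWeight ν α i = √(2 * π * α) ^ ν * cmpZ (α ^ ν) ν := by
  rw [cmpZ, ← tsum_mul_left]
  congr 1 with i
  rw [cmpWeight, mul_rpow (by positivity) (by positivity), div_rpow (by positivity) (by positivity),
    ← rpow_pow_comm hα]

lemma cmpZ_one (x : ℝ) : cmpZ x 1 = exp x := by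
  simp only [cmpZ, rpow_one, exp_eq_exp_ℝ, NormedSpace.exp_eq_tsum_div]

lemma tsum_cmpWeight_one {α : ℝ} (hα : 0 ≤ α) :
    ∑' i, cmpWeight 1 α i = √(2 * π * α) * exp α := by
  rw [tsum_cmpWeight 1 hα, rpow_one, rpow_one, cmpZ_one]

lemma cmpZ_normalized_eq {lam : ℝ} (hν : 0 < ν) (hlam : 0 < lam) :
    cmpZ lam ν * lam ^ ((ν - 1) / (2 * ν)) * (2 * π) ^ ((ν - 1) / 2) * √ν *
        exp (-(ν * lam ^ (1 / ν))) =
      ν * (∑' i, cmpWeight ν (lam ^ (1 / ν)) i) / ∑' i, cmpWeight 1 (ν * lam ^ (1 / ν)) i := by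
  obtain ⟨α, hα, rfl⟩ : ∃ α : ℝ, 0 < α ∧ α ^ ν = lam :=
    ⟨lam ^ (1 / ν), by positivity, by rw [← rpow_mul hlam.le, one_div_mul_cancel hν.ne', rpow_one]⟩
  have root_eq : (α ^ ν) ^ (1 / ν) = α := by
    rw [← rpow_mul hα.le, mul_one_div_cancel hν.ne', rpow_one]
  have pow_eq : (α ^ ν) ^ ((ν - 1) / (2 * ν)) = α ^ ((ν - 1) / 2) := by
    rw [← rpow_mul hα.le]
    congr 1
    field_simp
  have sqrt_rpow : √(2 * π * α) ^ ν =
      √(2 * π * α) * ((2 * π) ^ ((ν - 1) / 2) * α ^ ((ν - 1) / 2)) := by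
    rw [← mul_rpow (by positivity) hα.le, sqrt_eq_rpow, ← rpow_mul (by positivity),
      ← rpow_add (by positivity)]
    ring_nf
  have sqrt_mul : √(2 * π * (ν * α)) = √(2 * π * α) * √ν := by
    rw [← Real.sqrt_mul (by positivity)]
    ring_nf
  rw [root_eq, pow_eq, tsum_cmpWeight ν hα.le, tsum_cmpWeight_one (by positivity), sqrt_rpow,
    sqrt_mul, exp_neg]
  have : 0 < √ν := sqrt_pos.mpr hν
  field_simp
  rw [sq_sqrt hν.le]

end ClosedForm

lemma cmpZ_normalized_sub_one_isBigO {ν : ℝ} (hν : 0 < ν) :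
    (fun lam ↦ cmpZ lam ν * lam ^ ((ν - 1) / (2 * ν)) * (2 * π) ^ ((ν - 1) / 2) * √ν *
        exp (-(ν * lam ^ (1 / ν))) - 1) =O[atTop] fun lam ↦ lam ^ (-(1 / ν)) := by
  have h := ((mul_tsum_cmpWeight_sub_isBigO hν).mul
    (isBigO_refl (fun α ↦ (∑' i, cmpWeight 1 (ν * α) i)⁻¹) atTop)).comp_tendsto
    (tendsto_rpow_atTop (one_div_pos.mpr hν))
  refine h.congr' ?_ ?_ <;> filter_upwards [eventually_gt_atTop 0] with lam hlam
  all_goals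
    have hsum : ∑' i, cmpWeight 1 (ν * lam ^ (1 / ν)) i ≠ 0 := by
      rw [tsum_cmpWeight_one (by positivity)]
      positivity
    simp only [Function.comp_apply]
  · rw [cmpZ_normalized_eq hν hlam, sub_mul, mul_inv_cancel₀ hsum, div_eq_mul_inv (ν * _)]
  · rw [mul_inv_cancel_right₀ hsum, rpow_neg hlam.le]

/-- Leading-order asymptotics of the CMP normalizing constant:
`Z(λ,ν) = exp(ν λ^{1/ν}) / (λ^{(ν-1)/(2ν)} (2π)^{(ν-1)/2} √ν) (1 + O(λ^{-1/ν}))` as `λ → ∞`. -/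
theorem cmpZ_leading_asymptotic (ν : ℝ) (hν : 0 < ν) :
    ∃ C > (0 : ℝ), ∃ Λ > (0 : ℝ), ∀ lam : ℝ, lam ≥ Λ →
      |cmpZ lam ν * lam ^ ((ν - 1) / (2 * ν)) * (2 * Real.pi) ^ ((ν - 1) / 2) *
          Real.sqrt ν * Real.exp (-(ν * lam ^ (1 / ν))) - 1|
        ≤ C * lam ^ (-(1 / ν)) := by
  obtain ⟨C, hC, hbound⟩ := (cmpZ_normalized_sub_one_isBigO hν).exists_pos
  obtain ⟨Λ, hΛ⟩ := eventually_atTop.mp hbound.bound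
  refine ⟨C, hC, max Λ 1, by positivity, fun lam hlam ↦ ?_⟩
  have hlam₀ : 0 < lam := by linarith [le_max_right Λ 1]
  simpa only [Real.norm_eq_abs, abs_of_pos (rpow_pos_of_pos hlam₀ _)] using
    hΛ lam (le_of_max_le_left hlam)
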